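/- arXiv:1702.05142 — 5 statements merged into one kernel-verified Lean document; each statement's English description precedes it below -/
import Mathlib

section
/- Under the stated network and cost assumptions, with step-sizes μ_k = q_k μ_o / p_k, there exists a threshold μ̄ > 0 such that whenever 0 < μ_o ≤ μ̄, the exact diffusion iterates (W_i, Y_i) converge exponentially fast to (W⋆, Y⋆_o): there exist a constant C ≥ 0 and a rate ρ ∈ [0,1) such that for all i ≥ 0, ∑_{k=1}^N ‖(W_i)_k − w⋆‖² + ∑_{k=1}^N ‖(Y_i)_k − (Y⋆_o)_k‖² ≤ C ρ^i, where W⋆ = (w⋆, …, w⋆) and Y⋆_o is the unique dual vector lying in the range of V ⊗ I_M such that (W⋆, Y⋆_o) satisfies the optimality conditions. -/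
open Matrix

/-!
Write `w_i = W_i − W⋆`, `y_i = Y_i − Y⋆_o`, `B = P − V² = (P + AP)/2`, `K = diag(q_k / p_k)`,
`Q = PK = diag(q_k)`, and let `G w` be the block vector of gradient differences
`∇J_k(w⋆ + w_k) − ∇J_k(w⋆)`. Balancedness gives `P Āᵀ = B`, and since `Āᵀ` fixes and `V` kills
consensus vectors, the recursion multiplied by `P` becomes
`P w_i = B (w_{i−1} − μ K G w_{i−1}) − V y_{i−1}`, `y_i = y_{i−1} + V w_i`; equivalently, with
`Δ = w_i − w_{i−1}`, `B Δ = −μ B K G w_{i−1} − V y_i`.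

Primitivity makes `B` positive definite (`posDef_of_primitive`), so `B = RᵀR` with `R` injective,
and `E_i = ‖R w_i‖² + ‖y_i‖²` is a Lyapunov function. Pairing the last identity with `2 w_i`,
`E_i − E_{i−1} = −‖R Δ‖² − ‖V w_i‖² − 2μ⟨w_{i−1}, Q G⟩ − 2μ⟨Δ, Q G⟩ + 2μ⟨V w_i, V K G⟩`.
By cocoercivity of the gradients, `‖G‖²` is at most a multiple of `s = ⟨w_{i−1}, Q G⟩`, so for
small `μ` Young's inequality absorbs the two cross terms and leaves the decrease
`D = ½‖R Δ‖² + ½‖V w_i‖² + μ s`.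

Finally `E_i ≤ C D`. The kernel of `V` consists of consensus vectors, hence `w_i` is controlled by
`V w_i` and its `k₀`-th block, and strong convexity of `J_{k₀}` bounds the latter by `s` and `Δ`.
As `y_i` lies in the range of the symmetric map `V`, it is controlled by `V y_i`, which the
recursion expresses through `Δ` and `G`. Therefore `E_i ≤ C/(C+1) · E_{i−1}` (`contraction`).
-/

/-! ### Convex functions with Lipschitz gradient -/

theorem convex_gradient_le {E : Type*} [NormedAddCommGroup E] [InnerProductSpace ℝ E]
    [CompleteSpace E] {f : E → ℝ} {g x : E} (hf : ConvexOn ℝ Set.univ f)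
    (hg : HasGradientAt f g x) (y : E) : f x + inner ℝ g (y - x) ≤ f y := by
  have hφ : ConvexOn ℝ Set.univ (f ∘ (AffineMap.lineMap x y : ℝ →ᵃ[ℝ] E)) := by
    simpa using hf.comp_affineMap (AffineMap.lineMap x y : ℝ →ᵃ[ℝ] E)
  have hd : HasDerivAt (f ∘ (AffineMap.lineMap x y : ℝ →ᵃ[ℝ] E)) (inner ℝ g (y - x)) 0 := by
    have h1 : HasFDerivAt f (InnerProductSpace.toDual ℝ E g)
        ((AffineMap.lineMap x y : ℝ →ᵃ[ℝ] E) 0) := by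
      simpa using hg.hasFDerivAt
    have h2 := h1.comp_hasDerivAt (0 : ℝ) (AffineMap.hasDerivAt_lineMap (a := x) (b := y))
    simpa using h2
  have h3 := hφ.le_slope_of_hasDerivAt (Set.mem_univ 0) (Set.mem_univ 1) zero_lt_one hd
  simp [slope_def_field] at h3
  linarith

/-- Cocoercivity of the gradient, with the non-sharp constant `2δ` in place of `δ`: this allows
the descent inequality to be replaced by `f z ≤ f x + ⟨∇f x, z − x⟩ + δ‖z − x‖²`, a direct
consequence of convexity at `z` and the Lipschitz bound. -/
theorem gradient_cocoercive {E : Type*} [NormedAddCommGroup E] [InnerProductSpace ℝ E]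
    [CompleteSpace E] {f : E → ℝ} {g : E → E} (hf : ConvexOn ℝ Set.univ f)
    (hg : ∀ x, HasGradientAt f (g x) x) {δ : ℝ} (hδ : 0 < δ)
    (hLip : ∀ x y, ‖g x - g y‖ ≤ δ * ‖x - y‖) (x y : E) :
    ‖g x - g y‖ ^ 2 ≤ 2 * δ * inner ℝ (x - y) (g x - g y) := by
  have key : ∀ x y : E, f y - f x + inner ℝ (g y) (x - y) ≤ -(1 / (4 * δ)) * ‖g x - g y‖ ^ 2 := by
    intro x y
    -- one gradient step from `x` for the convex function `f − ⟨g y, ·⟩`, with step `1 / (2δ)`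
    set d := g x - g y with hd
    set t : ℝ := 1 / (2 * δ) with ht
    set z := x - t • d with hz
    have h1 := convex_gradient_le hf (hg y) z
    have h2 := convex_gradient_le hf (hg z) x
    have hzx : z - x = -(t • d) := by simp [hz]
    have h3 : inner ℝ (g z - g x) (z - x) ≤ δ * ‖z - x‖ ^ 2 := by
      refine (real_inner_le_norm _ _).trans ?_
      nlinarith [hLip z x, norm_nonneg (z - x)]
    have h4 : inner ℝ (g y) (z - y) = inner ℝ (g y) (x - y) - t * inner ℝ (g y) d := by
      rw [show z - y = (x - y) - t • d by simp [hz]; abel, inner_sub_right, inner_smul_right]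
    have h5 : inner ℝ (g z) (x - z) = - inner ℝ (g z - g x) (z - x) + t * inner ℝ (g x) d := by
      rw [← neg_sub z x, hzx]
      simp only [inner_sub_left, inner_smul_right, inner_neg_right, neg_neg]
      ring
    have h6 : ‖z - x‖ ^ 2 = t ^ 2 * ‖d‖ ^ 2 := by
      rw [hzx, norm_neg, norm_smul, mul_pow]; simp
    have h7 : inner ℝ (g x) d - inner ℝ (g y) d = ‖d‖ ^ 2 := by
      rw [← inner_sub_left, real_inner_self_eq_norm_sq]
    have h8 : t * ‖d‖ ^ 2 - δ * (t ^ 2 * ‖d‖ ^ 2) = (1 / (4 * δ)) * ‖d‖ ^ 2 := by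
      rw [ht]; field_simp; ring
    rw [h6] at h3
    have h9 : t * inner ℝ (g x) d - t * inner ℝ (g y) d = t * ‖d‖ ^ 2 := by
      rw [← h7]; ring
    linarith
  have h1 := key x y
  have h2 := key y x
  have h3 : inner ℝ (x - y) (g x - g y) = -(inner ℝ (g y) (x - y) + inner ℝ (g x) (y - x)) := by
    rw [← neg_sub x y, inner_neg_right, real_inner_comm, inner_sub_left]; ring
  rw [norm_sub_rev (g y)] at h2
  have h4 : (1 / (2 * δ)) * ‖g x - g y‖ ^ 2 ≤ inner ℝ (x - y) (g x - g y) := by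
    rw [h3]
    have : (1 / (2 * δ)) * ‖g x - g y‖ ^ 2 = 2 * ((1 / (4 * δ)) * ‖g x - g y‖ ^ 2) := by
      field_simp; ring
    linarith
  rw [one_div, inv_mul_le_iff₀ (by positivity)] at h4
  exact h4

theorem gradient_strongly_monotone {E : Type*} [NormedAddCommGroup E] [InnerProductSpace ℝ E]
    [CompleteSpace E] {f : E → ℝ} {g : E → E} {ν : ℝ} (hf : StrongConvexOn Set.univ ν f)
    (hg : ∀ x, HasGradientAt f (g x) x) (x y : E) :
    ν * ‖x - y‖ ^ 2 ≤ inner ℝ (x - y) (g x - g y) := by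
  have hc := strongConvexOn_iff_convex.1 hf
  have hd : ∀ x, HasGradientAt (fun x => f x - ν / 2 * ‖x‖ ^ 2) (g x - ν • x) x := by
    intro x
    rw [hasGradientAt_iff_hasFDerivAt]
    have h1 := (hg x).hasFDerivAt.sub
      ((hasStrictFDerivAt_norm_sq x).hasFDerivAt.const_mul (ν / 2))
    refine h1.congr_fderiv ?_
    ext v
    simp
    ring
  have h1 := convex_gradient_le hc (hd x) y
  have h2 := convex_gradient_le hc (hd y) x
  have h3 : inner ℝ (g x - ν • x) (y - x) + inner ℝ (g y - ν • y) (x - y)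
      = ν * ‖x - y‖ ^ 2 - inner ℝ (x - y) (g x - g y) := by
    rw [← neg_sub x y, inner_neg_right, ← real_inner_self_eq_norm_sq,
      real_inner_comm (g x - g y)]
    simp only [inner_sub_left, inner_smul_left, RCLike.conj_to_real]
    ring
  linarith

/-! ### The Lyapunov contraction in an abstract finite-dimensional space -/

theorem exists_sq_bound {H F : Type*} [NormedAddCommGroup H] [NormedSpace ℝ H]
    [FiniteDimensional ℝ H] [NormedAddCommGroup F] [NormedSpace ℝ F]
    (T : H →ₗ[ℝ] F) (hT : ∀ x, T x = 0 → x = 0) :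
    ∃ c : ℝ, 0 < c ∧ ∀ x, ‖x‖ ^ 2 ≤ c * ‖T x‖ ^ 2 := by
  obtain ⟨K, hK, h⟩ := T.exists_antilipschitzWith (LinearMap.ker_eq_bot'.2 hT)
  refine ⟨(K : ℝ) ^ 2, by positivity, fun x => ?_⟩
  have := h.le_mul_dist x 0
  rw [map_zero, dist_zero_right, dist_zero_right] at this
  rw [← mul_pow]
  gcongr

theorem exists_sq_opBound {H F : Type*} [NormedAddCommGroup H] [NormedSpace ℝ H]
    [FiniteDimensional ℝ H] [NormedAddCommGroup F] [NormedSpace ℝ F]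
    (T : H →ₗ[ℝ] F) : ∃ c : ℝ, 0 < c ∧ ∀ x, ‖T x‖ ^ 2 ≤ c * ‖x‖ ^ 2 := by
  refine ⟨(‖T.toContinuousLinearMap‖ + 1) ^ 2, by positivity, fun x => ?_⟩
  rw [← mul_pow]
  have := T.toContinuousLinearMap.le_opNorm x
  have h0 := norm_nonneg x
  gcongr
  simp only [LinearMap.coe_toContinuousLinearMap'] at this
  linarith

theorem two_inner_le {H : Type*} [NormedAddCommGroup H] [InnerProductSpace ℝ H] (x y : H)
    {a : ℝ} (ha : 0 < a) : 2 * inner ℝ x y ≤ a * ‖x‖ ^ 2 + a⁻¹ * ‖y‖ ^ 2 := by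
  have h := real_inner_le_norm x y
  have h1 : 0 ≤ a⁻¹ * (a * ‖x‖ - ‖y‖) ^ 2 := by positivity
  have h2 : a⁻¹ * (a * ‖x‖ - ‖y‖) ^ 2 = a * ‖x‖ ^ 2 + a⁻¹ * ‖y‖ ^ 2 - 2 * (‖x‖ * ‖y‖) := by
    field_simp; ring
  linarith

theorem norm_add_sq_le_two {H : Type*} [SeminormedAddCommGroup H] (x y : H) :
    ‖x + y‖ ^ 2 ≤ 2 * ‖x‖ ^ 2 + 2 * ‖y‖ ^ 2 := by
  have h := norm_add_le x y
  have h0 := norm_nonneg (x + y)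
  nlinarith [sq_nonneg (‖x‖ - ‖y‖)]

set_option maxHeartbeats 1000000 in
/-- One step of the primal-dual recursion, written for the errors, contracts
`‖R w‖² + ‖y‖²` once the step-size is small. Here `B = P − V² = R*R` is positive definite, `G` is
the centred gradient, cocoercive with respect to the weights `Q = PK`, and strongly monotone only
in the direction seen by `π`, which together with `V` separates points. -/
theorem contraction {H F : Type*} [NormedAddCommGroup H] [InnerProductSpace ℝ H]
    [FiniteDimensional ℝ H] [NormedAddCommGroup F] [NormedSpace ℝ F]
    (P V B R K Q : H →ₗ[ℝ] H) (π : H →ₗ[ℝ] F) (G : H → H) {c₁ c₂ : ℝ}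
    (hc₁ : 0 < c₁) (hc₂ : 0 < c₂)
    (hVsymm : ∀ x y, inner ℝ (V x) y = inner ℝ x (V y))
    (hB : ∀ x, B x = P x - V (V x))
    (hR : ∀ x y, inner ℝ x (B y) = inner ℝ (R x) (R y))
    (hRinj : ∀ x, R x = 0 → x = 0)
    (hQ : ∀ x, P (K x) = Q x)
    (hVπ : ∀ x, V x = 0 → π x = 0 → x = 0)
    (hcoc : ∀ x, ‖G x‖ ^ 2 ≤ c₁ * inner ℝ x (Q (G x)))
    (hmono : ∀ x, c₂ * ‖π x‖ ^ 2 ≤ inner ℝ x (Q (G x))) :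
    ∃ μbar : ℝ, 0 < μbar ∧ ∀ μ : ℝ, 0 < μ → μ ≤ μbar →
      ∃ ρ : ℝ, 0 ≤ ρ ∧ ρ < 1 ∧ ∀ w y w' y' : H, P w' = B (w - μ • K (G w)) - V y →
        y' = y + V w' → y' ∈ LinearMap.range V →
        ‖R w'‖ ^ 2 + ‖y'‖ ^ 2 ≤ ρ * (‖R w‖ ^ 2 + ‖y‖ ^ 2) := by
  obtain ⟨cR, hcR, hRlow⟩ := exists_sq_bound R hRinj
  obtain ⟨bR, hbR, hRup⟩ := exists_sq_opBound R
  obtain ⟨bQ, hbQ, hQup⟩ := exists_sq_opBound Q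
  obtain ⟨bVK, hbVK, hVKup⟩ := exists_sq_opBound (V ∘ₗ K)
  obtain ⟨bB, hbB, hBup⟩ := exists_sq_opBound B
  obtain ⟨bBK, hbBK, hBKup⟩ := exists_sq_opBound (B ∘ₗ K)
  obtain ⟨bπ, hbπ, hπup⟩ := exists_sq_opBound π
  obtain ⟨cV, hcV, hVlow⟩ := exists_sq_bound (V.prod π) (by
    intro x hx
    simp only [LinearMap.prod_apply, Function.prod_apply, Prod.mk_eq_zero] at hx
    exact hVπ x hx.1 hx.2)
  obtain ⟨cr, hcr, hrlow⟩ := exists_sq_bound (V.domRestrict (LinearMap.range V)) (by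
    rintro ⟨_, x, rfl⟩ hx
    simp only [LinearMap.domRestrict_apply] at hx
    have h : inner ℝ (V x) (V x) = 0 := by rw [hVsymm, hx, inner_zero_right]
    ext
    simpa using h)
  simp only [LinearMap.coe_comp, Function.comp_apply] at hVKup hBKup
  -- `2 cR bQ` and `2 bVK` come from absorbing the two cross terms into half of the
  -- quadratic dissipation
  set L := c₁ * (2 * cR * bQ + 2 * bVK) with hL
  have hLpos : 0 < L := by positivity
  refine ⟨L⁻¹, by positivity, fun μ hμ hμL => ?_⟩
  have hμL' : μ * L ≤ 1 := by
    have := mul_le_mul_of_nonneg_right hμL hLpos.le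
    rwa [inv_mul_cancel₀ hLpos.ne'] at this
  -- `1 / 2 * ‖R (w' - w)‖ ^ 2 + 1 / 2 * ‖V w'‖ ^ 2 + μ * inner ℝ w (Q (G w))` is the guaranteed
  -- decrease per step, and it dominates the new value of the Lyapunov function
  have main : ∃ C : ℝ, 0 < C ∧ ∀ w y w' y' : H, P w' = B (w - μ • K (G w)) - V y →
        y' = y + V w' → y' ∈ LinearMap.range V →
        ‖R w'‖ ^ 2 + ‖y'‖ ^ 2 ≤ (‖R w‖ ^ 2 + ‖y‖ ^ 2) -
          (1 / 2 * ‖R (w' - w)‖ ^ 2 + 1 / 2 * ‖V w'‖ ^ 2 + μ * inner ℝ w (Q (G w))) ∧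
        ‖R w'‖ ^ 2 + ‖y'‖ ^ 2 ≤ C *
          (1 / 2 * ‖R (w' - w)‖ ^ 2 + 1 / 2 * ‖V w'‖ ^ 2 + μ * inner ℝ w (Q (G w))) := by
    refine ⟨bR * cV * (2 + 2 / c₂ / μ + 4 * bπ * cR) + cr * (4 * bB * cR + 2 * μ * bBK * c₁),
      by positivity, fun w y w' y' hw hy hyr => ?_⟩
    set g := G w with hg
    set s := inner ℝ w (Q g) with hs
    set Δ := w' - w with hΔ
    have hs0 : 0 ≤ s := le_trans (by positivity) (hmono w)
    have hgs : ‖g‖ ^ 2 ≤ c₁ * s := hcoc w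
    have hrec : B Δ = -(μ • B (K g)) - V y' := by
      rw [hΔ, map_sub, hB w', hw, hy, map_add, map_sub, map_smul]
      abel
    have hΔR : ‖Δ‖ ^ 2 ≤ cR * ‖R Δ‖ ^ 2 := hRlow Δ
    constructor
    · have h1 : 2 * inner ℝ w' (B Δ) = ‖R w'‖ ^ 2 - ‖R w‖ ^ 2 + ‖R Δ‖ ^ 2 := by
        rw [hR, hΔ, map_sub, inner_sub_right, @norm_sub_sq_real, real_inner_self_eq_norm_sq]
        ring
      have h2 : 2 * inner ℝ w' (V y') = ‖y'‖ ^ 2 - ‖y‖ ^ 2 + ‖V w'‖ ^ 2 := by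
        have : y = y' - V w' := by rw [hy]; abel
        rw [← hVsymm, this, @norm_sub_sq_real, real_inner_comm]
        ring
      have h3 : inner ℝ w' (B (K g)) = s + inner ℝ Δ (Q g) - inner ℝ (V w') (V (K g)) := by
        rw [hB, hQ, inner_sub_right, hVsymm, hs, hΔ, inner_sub_left]
        ring
      rw [hrec, inner_sub_right, inner_neg_right, inner_smul_right, h3] at h1
      have h4 := two_inner_le Δ (-(μ • Q g)) (a := (2 * cR)⁻¹) (by positivity)
      have h5 := two_inner_le (V w') (μ • V (K g)) (a := 1 / 2) (by positivity)
      rw [inner_neg_right, inner_smul_right, norm_neg, norm_smul, mul_pow, inv_inv,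
        Real.norm_of_nonneg hμ.le] at h4
      rw [inner_smul_right, norm_smul, mul_pow, Real.norm_of_nonneg hμ.le] at h5
      have h6 : (2 * cR)⁻¹ * ‖Δ‖ ^ 2 ≤ 1 / 2 * ‖R Δ‖ ^ 2 := by
        rw [inv_mul_le_iff₀ (by positivity)]
        linarith
      have h7 : 2 * cR * (μ ^ 2 * ‖Q g‖ ^ 2) ≤ 2 * cR * (μ ^ 2 * (bQ * (c₁ * s))) := by
        have := (hQup g).trans (mul_le_mul_of_nonneg_left hgs hbQ.le)
        gcongr
      have h8 : (1 / 2 : ℝ)⁻¹ * (μ ^ 2 * ‖V (K g)‖ ^ 2) ≤ 2 * (μ ^ 2 * (bVK * (c₁ * s))) := by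
        have := (hVKup g).trans (mul_le_mul_of_nonneg_left hgs hbVK.le)
        norm_num
        gcongr
      have h9 : 2 * cR * (μ ^ 2 * (bQ * (c₁ * s))) + 2 * (μ ^ 2 * (bVK * (c₁ * s))) ≤ μ * s := by
        calc _ = (μ * L) * (μ * s) := by rw [hL]; ring
          _ ≤ 1 * (μ * s) := by gcongr
          _ = μ * s := one_mul _
      linarith
    · set D := 1 / 2 * ‖R Δ‖ ^ 2 + 1 / 2 * ‖V w'‖ ^ 2 + μ * s with hD
      have hμs : 0 ≤ μ * s := by positivity
      have hV0 := sq_nonneg ‖V w'‖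
      have hR0 := sq_nonneg ‖R Δ‖
      have d1 : ‖R Δ‖ ^ 2 ≤ 2 * D := by linarith
      have d2 : ‖V w'‖ ^ 2 ≤ 2 * D := by linarith
      have d3 : μ * s ≤ D := by linarith
      have d4 : s ≤ D / μ := by rw [le_div_iff₀ hμ]; linarith
      have dΔ : ‖Δ‖ ^ 2 ≤ cR * (2 * D) := hΔR.trans (by gcongr)
      have e1 : ‖π w‖ ^ 2 ≤ D / μ / c₂ := by
        rw [le_div_iff₀ hc₂]
        linarith [hmono w]
      have e2 : ‖π w'‖ ^ 2 ≤ 2 * (D / μ / c₂) + 2 * (bπ * (cR * (2 * D))) := by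
        have h := norm_add_sq_le_two (π w) (π Δ)
        rw [← map_add, show w + Δ = w' by rw [hΔ]; abel] at h
        have := (hπup Δ).trans (mul_le_mul_of_nonneg_left dΔ hbπ.le)
        linarith
      have e3 : ‖w'‖ ^ 2 ≤ cV * (2 * D + (2 * (D / μ / c₂) + 2 * (bπ * (cR * (2 * D))))) := by
        refine (hVlow w').trans (mul_le_mul_of_nonneg_left ?_ hcV.le)
        have : ‖(V.prod π) w'‖ ^ 2 ≤ ‖V w'‖ ^ 2 + ‖π w'‖ ^ 2 := by
          simp only [LinearMap.prod_apply, Function.prod_apply, Prod.norm_mk]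
          have f1 := sq_nonneg ‖V w'‖
          have f2 := sq_nonneg ‖π w'‖
          rcases max_cases ‖V w'‖ ‖π w'‖ with h | h <;> rw [h.1] <;> linarith
        linarith
      have e4 : ‖y'‖ ^ 2 ≤ cr * ‖V y'‖ ^ 2 := hrlow ⟨y', hyr⟩
      have e5 : ‖V y'‖ ^ 2 ≤ 2 * (bB * (cR * (2 * D))) + 2 * (μ ^ 2 * (bBK * (c₁ * (D / μ)))) := by
        have : V y' = -(B Δ) + -(μ • B (K g)) := by rw [hrec]; abel
        rw [this]
        refine (norm_add_sq_le_two _ _).trans ?_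
        rw [norm_neg, norm_neg, norm_smul, mul_pow, Real.norm_of_nonneg hμ.le]
        have f1 := (hBup Δ).trans (mul_le_mul_of_nonneg_left dΔ hbB.le)
        have f2 : ‖B (K g)‖ ^ 2 ≤ bBK * (c₁ * (D / μ)) :=
          (hBKup g).trans (mul_le_mul_of_nonneg_left
            (hgs.trans (mul_le_mul_of_nonneg_left d4 hc₁.le)) hbBK.le)
        gcongr
      calc ‖R w'‖ ^ 2 + ‖y'‖ ^ 2
          ≤ bR * (cV * (2 * D + (2 * (D / μ / c₂) + 2 * (bπ * (cR * (2 * D)))))) +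
            cr * (2 * (bB * (cR * (2 * D))) + 2 * (μ ^ 2 * (bBK * (c₁ * (D / μ))))) := by
            refine add_le_add ((hRup w').trans ?_) (e4.trans ?_) <;> gcongr
        _ = _ := by field_simp; ring
  obtain ⟨C, hC, hmain⟩ := main
  refine ⟨C / (C + 1), by positivity, by rw [div_lt_one (by positivity)]; linarith, ?_⟩
  intro w y w' y' hw hy hyr
  obtain ⟨h1, h2⟩ := hmain w y w' y' hw hy hyr
  rw [div_mul_eq_mul_div, le_div_iff₀ (by positivity)]
  nlinarith

/-! ### The network matrices -/

/-- An eigenvector of `Aᵀ` for an eigenvalue `σ = ±1` is constant: the variances of `x` under the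
positive columns of `A ^ m`, averaged with the weights `p`, sum to zero. -/
theorem eq_of_transpose_mulVec {N : ℕ} {A : Matrix (Fin N) (Fin N) ℝ}
    (hAleft : ∀ j, ∑ i, A i j = 1)
    (hAprim : ∃ m : ℕ, 0 < m ∧ ∀ i j, 0 < (A ^ m) i j)
    {p : Fin N → ℝ} (hp : ∀ k, 0 < p k) (hAp : A.mulVec p = p)
    {x : Fin N → ℝ} {σ : ℝ} (hσ : σ ^ 2 = 1) (hx : Aᵀ *ᵥ x = σ • x) (i j : Fin N) :
    x i = x j := by
  obtain ⟨m, -, hm⟩ := hAprim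
  set T := A ^ m with hT
  have hTp : T *ᵥ p = p := by
    have : ∀ n : ℕ, A ^ n *ᵥ p = p := by
      intro n
      induction n with
      | zero => simp
      | succ n ih => rw [pow_succ, ← mulVec_mulVec, hAp, ih]
    exact this m
  have hTx : Tᵀ *ᵥ x = σ ^ m • x := by
    have : ∀ n : ℕ, (A ^ n)ᵀ *ᵥ x = σ ^ n • x := by
      intro n
      induction n with
      | zero => simp
      | succ n ih =>
        rw [pow_succ, transpose_mul, ← mulVec_mulVec, ih, mulVec_smul, hx, smul_smul, pow_succ]
    exact this m
  have hTleft : ∀ k, ∑ l, T l k = 1 := by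
    have h1 : Aᵀ *ᵥ (1 : Fin N → ℝ) = 1 := by
      ext k; simp [mulVec, dotProduct, hAleft]
    have : ∀ n : ℕ, (A ^ n)ᵀ *ᵥ (1 : Fin N → ℝ) = 1 := by
      intro n
      induction n with
      | zero => simp
      | succ n ih => rw [pow_succ, transpose_mul, ← mulVec_mulVec, ih, h1]
    intro k
    simpa [mulVec, dotProduct] using congrFun (this m) k
  have hs : ∀ k, ∑ l, T l k * x l = σ ^ m * x k := by
    intro k
    simpa [mulVec, dotProduct] using congrFun hTx k
  have hσm : (σ ^ m) ^ 2 = 1 := by rw [← pow_mul, mul_comm, pow_mul, hσ, one_pow]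
  -- the `p`-weighted sum of the variances of `x` under the columns of `T`
  have hvar : ∑ k, p k * ∑ l, T l k * (x l - σ ^ m * x k) ^ 2 = 0 := by
    have h1 : ∀ k, ∑ l, T l k * (x l - σ ^ m * x k) ^ 2 = ∑ l, T l k * x l ^ 2 - x k ^ 2 := by
      intro k
      have : ∀ l, T l k * (x l - σ ^ m * x k) ^ 2 = T l k * x l ^ 2
          - 2 * (σ ^ m * x k) * (T l k * x l) + (σ ^ m * x k) ^ 2 * T l k := fun l => by ring
      simp_rw [this, Finset.sum_add_distrib, Finset.sum_sub_distrib, ← Finset.mul_sum, hs,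
        hTleft, mul_pow, hσm]
      linear_combination (-2 * x k ^ 2) * hσm
    simp_rw [h1, mul_sub, Finset.sum_sub_distrib, Finset.mul_sum]
    rw [Finset.sum_comm, sub_eq_zero]
    refine Finset.sum_congr rfl fun l _ => ?_
    have h2 : ∑ k, T l k * p k = p l := by
      simpa [mulVec, dotProduct] using congrFun hTp l
    calc ∑ k, p k * (T l k * x l ^ 2) = (∑ k, T l k * p k) * x l ^ 2 := by
          rw [Finset.sum_mul]; exact Finset.sum_congr rfl fun k _ => by ring
      _ = _ := by rw [h2]
  have hterm : ∀ k l, 0 ≤ T l k * (x l - σ ^ m * x k) ^ 2 := fun k l =>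
    mul_nonneg (hm l k).le (sq_nonneg _)
  have hk : ∀ k l, x l = σ ^ m * x k := by
    intro k l
    have h1 := (Finset.sum_eq_zero_iff_of_nonneg (fun k _ =>
      mul_nonneg (hp k).le (Finset.sum_nonneg fun l _ => hterm k l))).1 hvar k (Finset.mem_univ k)
    have h2 := (mul_eq_zero.1 h1).resolve_left (hp k).ne'
    have h3 := (Finset.sum_eq_zero_iff_of_nonneg (fun l _ => hterm k l)).1 h2 l (Finset.mem_univ l)
    have h4 := (mul_eq_zero.1 h3).resolve_left (hm l k).ne'
    exact sub_eq_zero.1 (pow_eq_zero_iff two_ne_zero |>.1 h4)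
  rw [hk i i, ← hk i j]

/-- The operator `S ⊗ I_M` on block vectors; the `ℓ²` product makes the space of block vectors
Euclidean, with squared norm `∑ k, ‖x k‖ ^ 2`. -/
noncomputable def blockOp {N M : ℕ} (S : Matrix (Fin N) (Fin N) ℝ) :
    PiLp 2 (fun _ : Fin N => EuclideanSpace ℝ (Fin M)) →ₗ[ℝ]
      PiLp 2 (fun _ : Fin N => EuclideanSpace ℝ (Fin M)) where
  toFun x := WithLp.toLp 2 fun k => ∑ l, S k l • x l
  map_add' x y := by
    ext1 k
    simp [Finset.sum_add_distrib]
  map_smul' c x := by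
    ext1 k
    simp [Finset.smul_sum, smul_comm c]

section
variable {N M : ℕ}

theorem blockOp_apply (S : Matrix (Fin N) (Fin N) ℝ)
    (x : PiLp 2 (fun _ : Fin N => EuclideanSpace ℝ (Fin M))) (k : Fin N) :
    blockOp S x k = ∑ l, S k l • x l := rfl

theorem blockOp_mul (S T : Matrix (Fin N) (Fin N) ℝ)
    (x : PiLp 2 (fun _ : Fin N => EuclideanSpace ℝ (Fin M))) :
    blockOp (S * T) x = blockOp S (blockOp T x) := by
  ext1 k
  simp only [blockOp_apply, Matrix.mul_apply, Finset.sum_smul, Finset.smul_sum, smul_smul]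
  rw [Finset.sum_comm]

theorem blockOp_sub (S T : Matrix (Fin N) (Fin N) ℝ)
    (x : PiLp 2 (fun _ : Fin N => EuclideanSpace ℝ (Fin M))) :
    blockOp (S - T) x = blockOp S x - blockOp T x := by
  ext1 k
  simp [blockOp_apply, sub_smul]

theorem blockOp_one (x : PiLp 2 (fun _ : Fin N => EuclideanSpace ℝ (Fin M))) :
    blockOp 1 x = x := by
  ext1 k
  simp [blockOp_apply, Matrix.one_apply]

theorem blockOp_diagonal_apply (d : Fin N → ℝ)
    (x : PiLp 2 (fun _ : Fin N => EuclideanSpace ℝ (Fin M))) (k : Fin N) :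
    blockOp (diagonal d) x k = d k • x k := by
  simp [blockOp_apply, Matrix.diagonal_apply]

theorem inner_blockOp_transpose (S : Matrix (Fin N) (Fin N) ℝ)
    (x y : PiLp 2 (fun _ : Fin N => EuclideanSpace ℝ (Fin M))) :
    inner ℝ (blockOp Sᵀ x) y = inner ℝ x (blockOp S y) := by
  simp only [PiLp.inner_apply, blockOp_apply, sum_inner, inner_sum, inner_smul_left,
    inner_smul_right, Matrix.transpose_apply, RCLike.conj_to_real]
  rw [Finset.sum_comm]

end

/-- The quadratic form of `P + AP` is `½ ∑ A_{kl} p_l (x_k + x_l)²`; it vanishes only if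
`Aᵀx = −x`, which primitivity excludes for `x ≠ 0`. -/
theorem posDef_of_primitive {N : ℕ} {A : Matrix (Fin N) (Fin N) ℝ}
    (hApos : ∀ i j, 0 ≤ A i j) (hAleft : ∀ j, ∑ i, A i j = 1)
    (hAprim : ∃ m : ℕ, 0 < m ∧ ∀ i j, 0 < (A ^ m) i j)
    {p : Fin N → ℝ} (hp : ∀ k, 0 < p k) (hAp : A.mulVec p = p)
    (hbal : Matrix.diagonal p * Aᵀ = A * Matrix.diagonal p) :
    (diagonal p + A * diagonal p).PosDef := by
  refine .of_dotProduct_mulVec_pos ?_ fun x hx => ?_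
  · rw [IsHermitian, conjTranspose_eq_transpose_of_trivial, transpose_add, transpose_mul,
      diagonal_transpose, hbal]
  have hrow : ∀ k, ∑ l, A k l * p l = p k := fun k => by
    simpa [mulVec, dotProduct] using congrFun hAp k
  have hquad : star x ⬝ᵥ ((diagonal p + A * diagonal p) *ᵥ x)
      = 2⁻¹ * ∑ l, p l * ∑ k, A k l * (x k + x l) ^ 2 := by
    have h1 : ∀ l, ∑ k, A k l * (x k + x l) ^ 2
        = ∑ k, A k l * x k ^ 2 + 2 * (∑ k, A k l * (x k * x l)) + x l ^ 2 := by
      intro l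
      rw [Finset.mul_sum, ← mul_one (x l ^ 2), ← hAleft l, Finset.mul_sum,
        ← Finset.sum_add_distrib, ← Finset.sum_add_distrib]
      exact Finset.sum_congr rfl fun k _ => by ring
    have h2 : ∑ l, p l * ∑ k, A k l * x k ^ 2 = ∑ k, p k * x k ^ 2 := by
      simp_rw [Finset.mul_sum]
      rw [Finset.sum_comm]
      refine Finset.sum_congr rfl fun k _ => ?_
      rw [← hrow k, Finset.sum_mul]
      exact Finset.sum_congr rfl fun l _ => by ring
    have h3 : star x ⬝ᵥ ((diagonal p + A * diagonal p) *ᵥ x)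
        = ∑ k, p k * x k ^ 2 + ∑ l, p l * ∑ k, A k l * (x k * x l) := by
      rw [add_mulVec, dotProduct_add]
      congr 1
      · simp only [dotProduct, mulVec_diagonal, Pi.star_apply, star_trivial]
        exact Finset.sum_congr rfl fun k _ => by ring
      · simp_rw [dotProduct, mulVec, dotProduct, Finset.mul_sum, mul_diagonal]
        rw [Finset.sum_comm]
        refine Finset.sum_congr rfl fun l _ => Finset.sum_congr rfl fun k _ => ?_
        simp only [Pi.star_apply, star_trivial]
        ring
    rw [h3]
    simp_rw [h1, mul_add, Finset.sum_add_distrib, h2, mul_left_comm (p _) 2, ← Finset.mul_sum]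
    ring
  have hterm : ∀ l k, 0 ≤ A k l * (x k + x l) ^ 2 := fun l k =>
    mul_nonneg (hApos k l) (sq_nonneg _)
  have hsum : ∀ l, 0 ≤ p l * ∑ k, A k l * (x k + x l) ^ 2 := fun l =>
    mul_nonneg (hp l).le (Finset.sum_nonneg fun k _ => hterm l k)
  rw [hquad]
  refine mul_pos (by norm_num) (lt_of_le_of_ne (Finset.sum_nonneg fun l _ => hsum l) ?_)
  intro h0
  have hzero : ∀ l k, A k l * (x k + x l) = 0 := by
    intro l k
    have h1 := (Finset.sum_eq_zero_iff_of_nonneg (fun l _ => hsum l)).1 h0.symm l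
      (Finset.mem_univ l)
    have h2 := (mul_eq_zero.1 h1).resolve_left (hp l).ne'
    have h3 := (Finset.sum_eq_zero_iff_of_nonneg (fun k _ => hterm l k)).1 h2 k
      (Finset.mem_univ k)
    rcases mul_eq_zero.1 h3 with h | h
    · rw [h, zero_mul]
    · rw [pow_eq_zero_iff two_ne_zero |>.1 h, mul_zero]
  have hneg : ∀ l, ∑ k, A k l * x k = - x l := by
    intro l
    have h := Finset.sum_eq_zero (s := Finset.univ) fun k _ => hzero l k
    simp_rw [mul_add, Finset.sum_add_distrib, ← Finset.sum_mul, hAleft] at h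
    linarith
  have hconst := eq_of_transpose_mulVec hAleft hAprim hp hAp (x := x) (σ := -1) (by norm_num)
    (by ext l; simpa [mulVec, dotProduct] using hneg l)
  apply hx
  ext l
  have h := hneg l
  simp_rw [fun k => hconst k l, ← Finset.sum_mul, hAleft] at h
  simp only [Pi.zero_apply]
  linarith

open scoped MatrixOrder Matrix.Norms.L2Operator in
theorem exists_eq_transpose_mul_self {N : ℕ} {B : Matrix (Fin N) (Fin N) ℝ}
    (hB : B.PosSemidef) : ∃ r : Matrix (Fin N) (Fin N) ℝ, B = rᵀ * r := by
  obtain ⟨r, hr⟩ := CStarAlgebra.nonneg_iff_eq_star_mul_self.mp hB.nonneg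
  exact ⟨r, by rw [hr, star_eq_conjTranspose, conjTranspose_eq_transpose_of_trivial]⟩

/-! ### Linear convergence -/

/-- Linear convergence of exact diffusion: in the network setup with cost assumptions and
step-sizes `μ_k = q_k μ_o / p_k`, there is a threshold `μ̄ > 0` such that for every
`0 < μ_o ≤ μ̄`, the exact-diffusion iterates `(W_i, Y_i)` (started from arbitrary `W_{−1}`
and `Y_{−1} = 0`; here `W 0, Y 0` play the role of `W_{−1}, Y_{−1}` and `W (i+1), Y (i+1)`
the role of `W_i, Y_i`) converge exponentially fast to `(W⋆, Y⋆_o)`: there exist `C ≥ 0`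
and `ρ ∈ [0,1)` with
`∑_k ‖(W_i)_k − w⋆‖² + ∑_k ‖(Y_i)_k − (Y⋆_o)_k‖² ≤ C ρ^i` for all `i ≥ 0`, where
`W⋆ = (w⋆,…,w⋆)` and `Y⋆_o` is the unique dual vector in the range of `V ⊗ I_M`
satisfying the optimality conditions. -/
theorem stmt_0 (N M : ℕ) (hN : 0 < N) (A : Matrix (Fin N) (Fin N) ℝ)
    (hApos : ∀ i j, 0 ≤ A i j)
    (hAleft : ∀ j, ∑ i, A i j = 1)
    (hAprim : ∃ m : ℕ, 0 < m ∧ ∀ i j, 0 < (A ^ m) i j)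
    (p : Fin N → ℝ) (hp : ∀ k, 0 < p k) (hpsum : ∑ k, p k = 1)
    (hAp : A.mulVec p = p)
    (hbal : Matrix.diagonal p * Aᵀ = A * Matrix.diagonal p)
    (V : Matrix (Fin N) (Fin N) ℝ) (hV : V.PosSemidef)
    (hVsq : V * V = (2⁻¹ : ℝ) • (Matrix.diagonal p - A * Matrix.diagonal p))
    (J : Fin N → EuclideanSpace ℝ (Fin M) → ℝ)
    (gJ : Fin N → EuclideanSpace ℝ (Fin M) → EuclideanSpace ℝ (Fin M))
    (hgJ : ∀ k x, HasGradientAt (J k) (gJ k x) x)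
    (hconv : ∀ k, ConvexOn ℝ Set.univ (J k))
    (δ : ℝ) (hδ : 0 < δ)
    (hLip : ∀ k x y, ‖gJ k x - gJ k y‖ ≤ δ * ‖x - y‖)
    (ν : ℝ) (hν : 0 < ν) (k₀ : Fin N)
    (hsc : StrongConvexOn Set.univ ν (J k₀))
    (q : Fin N → ℝ) (hq : ∀ k, 0 < q k)
    (wstar : EuclideanSpace ℝ (Fin M))
    (hwstar : ∀ w, ∑ k, q k * J k wstar ≤ ∑ k, q k * J k w) :
    ∃ μbar : ℝ, 0 < μbar ∧
      ∀ μo : ℝ, 0 < μo → μo ≤ μbar →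
        ∀ (W Y : ℕ → Fin N → EuclideanSpace ℝ (Fin M))
          (Ystar : Fin N → EuclideanSpace ℝ (Fin M)),
          -- `Y⋆_o` lies in the range of `V ⊗ I_M`
          (∃ Xv : Fin N → EuclideanSpace ℝ (Fin M),
            Ystar = fun k => ∑ l, V k l • Xv l) →
          -- optimality condition satisfied by `(W⋆, Y⋆_o)` with `W⋆ = (w⋆,…,w⋆)`
          (∀ k, (∑ l, (((2⁻¹ : ℝ) • ((1 : Matrix (Fin N) (Fin N) ℝ) + A)) l k
              * (q l * μo / p l)) • gJ l wstar)
            + (p k)⁻¹ • (∑ l, V k l • Ystar l) = 0) →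
          -- initialization `Y_{−1} = 0`
          Y 0 = 0 →
          -- exact-diffusion primal recursion with step-sizes `μ_k = q_k μ_o / p_k`
          (∀ i k, W (i + 1) k =
            (∑ l, (((2⁻¹ : ℝ) • ((1 : Matrix (Fin N) (Fin N) ℝ) + A)) l k)
              • (W i l - (q l * μo / p l) • gJ l (W i l)))
            - (p k)⁻¹ • (∑ l, V k l • Y i l)) →
          -- dual recursion
          (∀ i k, Y (i + 1) k = Y i k + ∑ l, V k l • W (i + 1) l) →
          ∃ C : ℝ, 0 ≤ C ∧ ∃ ρ : ℝ, 0 ≤ ρ ∧ ρ < 1 ∧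
            ∀ i : ℕ,
              (∑ k, ‖W (i + 1) k - wstar‖ ^ 2) +
                (∑ k, ‖Y (i + 1) k - Ystar k‖ ^ 2) ≤ C * ρ ^ i := by
  have hPD := posDef_of_primitive hApos hAleft hAprim hp hAp hbal
  have hBmat : diagonal p - V * V = (2⁻¹ : ℝ) • (diagonal p + A * diagonal p) := by
    rw [hVsq]
    ext k l
    simp only [Matrix.sub_apply, Matrix.smul_apply, Matrix.add_apply, smul_eq_mul]
    ring
  have hBPD : (diagonal p - V * V).PosDef := by
    rw [hBmat]; exact hPD.smul (by norm_num)
  have hBentry : ∀ k l, (diagonal p - V * V) k l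
      = p k * ((2⁻¹ : ℝ) • ((1 : Matrix (Fin N) (Fin N) ℝ) + A)) l k := by
    intro k l
    rw [hBmat, ← hbal]
    simp only [Matrix.smul_apply, Matrix.add_apply, smul_eq_mul, diagonal_mul, transpose_apply, one_apply,
      diagonal_apply]
    rcases eq_or_ne k l with rfl | h
    · simp; ring
    · simp [h, h.symm]; ring
  have hVT : Vᵀ = V := by
    have := hV.isHermitian
    rwa [IsHermitian, conjTranspose_eq_transpose_of_trivial] at this
  have hVV : ∀ x : Fin N → ℝ, (V * V) *ᵥ x = 0 ↔ V *ᵥ x = 0 := by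
    intro x
    have := conjTranspose_mul_self_mulVec_eq_zero V x
    rwa [conjTranspose_eq_transpose_of_trivial, hVT] at this
  have hcol : ∀ k, ∑ l, ((2⁻¹ : ℝ) • ((1 : Matrix (Fin N) (Fin N) ℝ) + A)) l k = 1 := by
    intro k
    simp only [Matrix.smul_apply, Matrix.add_apply, smul_eq_mul, ← Finset.mul_sum, Finset.sum_add_distrib,
      hAleft, one_apply]
    simp; norm_num
  -- the row sums of `V` vanish
  have hV1 : ∀ k, ∑ l, V k l = 0 := by
    have h : V *ᵥ (1 : Fin N → ℝ) = 0 := by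
      rw [← hVV, hVsq, smul_mulVec, sub_mulVec, ← mulVec_mulVec]
      have : diagonal p *ᵥ (1 : Fin N → ℝ) = p := by ext k; simp [mulVec_diagonal]
      rw [this, hAp, sub_self, smul_zero]
    intro k
    simpa [mulVec, dotProduct] using congrFun h k
  have hVker : ∀ x : Fin N → ℝ, V *ᵥ x = 0 → ∀ i j, x i = x j := by
    intro x hx
    have h : (V * V) *ᵥ x = 0 := (hVV x).2 hx
    refine eq_of_transpose_mulVec hAleft hAprim hp hAp (σ := 1) (by norm_num) ?_
    rw [hVsq, ← hbal, smul_mulVec, sub_mulVec, ← mulVec_mulVec] at h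
    ext k
    have hk := congrFun h k
    simp only [Pi.smul_apply, Pi.sub_apply, mulVec_diagonal, smul_eq_mul, Pi.zero_apply] at hk
    have hpk := (hp k).ne'
    have : p k * ((Aᵀ *ᵥ x) k - x k) = 0 := by linarith
    have := (mul_eq_zero.1 this).resolve_left hpk
    simp only [one_smul]
    linarith
  obtain ⟨r, hr⟩ := exists_eq_transpose_mul_self hBPD.posSemidef
  have hRinj : ∀ x : PiLp 2 (fun _ : Fin N => EuclideanSpace ℝ (Fin M)),
      blockOp r x = 0 → x = 0 := by
    intro x hx
    have hu : IsUnit (diagonal p - V * V) := hBPD.isUnit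
    have h : blockOp (diagonal p - V * V) x = 0 := by rw [hr, blockOp_mul, hx, map_zero]
    rw [← blockOp_one x, ← nonsing_inv_mul _ ((isUnit_iff_isUnit_det _).1 hu), blockOp_mul, h,
      map_zero]
  -- the gradient as a function of the error `x = W − W⋆`, centred at `w⋆`; it does not depend
  -- on the step-size
  let G : PiLp 2 (fun _ : Fin N => EuclideanSpace ℝ (Fin M)) →
      PiLp 2 (fun _ : Fin N => EuclideanSpace ℝ (Fin M)) :=
    fun x => WithLp.toLp 2 fun k => gJ k (wstar + x k) - gJ k wstar
  have hcock : ∀ (x : PiLp 2 (fun _ : Fin N => EuclideanSpace ℝ (Fin M))) k,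
      ‖G x k‖ ^ 2 ≤ 2 * δ * inner ℝ (x k) (G x k) := by
    intro x k
    have := gradient_cocoercive (hconv k) (hgJ k) hδ (hLip k) (wstar + x k) wstar
    rwa [add_sub_cancel_left] at this
  have hmonok : ∀ (x : PiLp 2 (fun _ : Fin N => EuclideanSpace ℝ (Fin M))) k,
      0 ≤ inner ℝ (x k) (G x k) := by
    intro x k
    have := (sq_nonneg _).trans (hcock x k)
    exact nonneg_of_mul_nonneg_right this (by positivity)
  have hinner : ∀ x : PiLp 2 (fun _ : Fin N => EuclideanSpace ℝ (Fin M)),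
      inner ℝ x (blockOp (diagonal q) (G x)) = ∑ k, q k * inner ℝ (x k) (G x k) := by
    intro x
    simp only [PiLp.inner_apply, blockOp_diagonal_apply, inner_smul_right]
  obtain ⟨μbar, hμbar, hcontr⟩ := contraction
    (blockOp (M := M) (diagonal p)) (blockOp V) (blockOp (diagonal p - V * V)) (blockOp r)
    (blockOp (diagonal fun k => q k / p k)) (blockOp (diagonal q))
    (PiLp.projₗ 2 (fun _ : Fin N => EuclideanSpace ℝ (Fin M)) (𝕜 := ℝ) k₀) G
    (c₁ := 2 * δ * ∑ k, (q k)⁻¹) (c₂ := q k₀ * ν)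
    (by
      have : 0 < ∑ k, (q k)⁻¹ :=
        Finset.sum_pos (fun k _ => inv_pos.2 (hq k)) ⟨k₀, Finset.mem_univ _⟩
      positivity)
    (mul_pos (hq k₀) hν)
    (fun x y => by rw [← inner_blockOp_transpose, hVT])
    (fun x => by rw [blockOp_sub, blockOp_mul])
    (fun x y => by rw [hr, blockOp_mul, ← inner_blockOp_transpose, transpose_transpose])
    hRinj
    (fun x => by
      rw [← blockOp_mul, diagonal_mul_diagonal]
      congr 3
      ext k
      have := (hp k).ne'
      field_simp)
    (fun x hx hπ => by
      ext k m
      have h : V *ᵥ (fun l => x l m) = 0 := by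
        ext j
        have hj : blockOp V x j m = 0 := by rw [hx]; rfl
        rw [blockOp_apply] at hj
        simpa [mulVec, dotProduct] using hj
      have h0 : x k₀ = 0 := hπ
      rw [hVker _ h k k₀, h0]
      rfl)
    (fun x => by
      rw [hinner, PiLp.norm_sq_eq_of_L2, Finset.mul_sum]
      refine Finset.sum_le_sum fun k _ => (hcock x k).trans ?_
      have h1 : (q k)⁻¹ ≤ ∑ k, (q k)⁻¹ :=
        Finset.single_le_sum (fun k _ => (inv_pos.2 (hq k)).le) (Finset.mem_univ k)
      have h2 : 1 ≤ (∑ k, (q k)⁻¹) * q k := by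
        have := mul_le_mul_of_nonneg_right h1 (hq k).le
        rwa [inv_mul_cancel₀ (hq k).ne'] at this
      calc 2 * δ * inner ℝ (x k) (G x k)
          = 2 * δ * (1 * inner ℝ (x k) (G x k)) := by ring
        _ ≤ 2 * δ * (((∑ k, (q k)⁻¹) * q k) * inner ℝ (x k) (G x k)) := by
          have := hmonok x k
          gcongr
        _ = _ := by ring)
    (fun x => by
      rw [hinner]
      have h1 := gradient_strongly_monotone hsc (hgJ k₀) (wstar + x k₀) wstar
      rw [add_sub_cancel_left] at h1
      calc q k₀ * ν * ‖x k₀‖ ^ 2 ≤ q k₀ * inner ℝ (x k₀) (G x k₀) := by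
            rw [mul_assoc]; exact mul_le_mul_of_nonneg_left h1 (hq k₀).le
        _ ≤ _ := Finset.single_le_sum (f := fun k => q k * inner ℝ (x k) (G x k))
            (fun k _ => mul_nonneg (hq k).le (hmonok x k)) (Finset.mem_univ k₀))
  obtain ⟨cR, hcR, hRlow⟩ := exists_sq_bound (blockOp (M := M) r) hRinj
  refine ⟨μbar, hμbar, fun μo hμ hμle W Y Ystar hrange hopt hY0 hW hY => ?_⟩
  obtain ⟨ρ, hρ0, hρ1, hstep⟩ := hcontr μo hμ hμle
  let w : ℕ → PiLp 2 (fun _ : Fin N => EuclideanSpace ℝ (Fin M)) :=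
    fun i => WithLp.toLp 2 fun k => W i k - wstar
  let y : ℕ → PiLp 2 (fun _ : Fin N => EuclideanSpace ℝ (Fin M)) :=
    fun i => WithLp.toLp 2 fun k => Y i k - Ystar k
  have hw_rec : ∀ i, blockOp (diagonal p) (w (i + 1)) = blockOp (diagonal p - V * V)
      (w i - μo • blockOp (diagonal fun k => q k / p k) (G (w i))) - blockOp V (y i) := by
    intro i
    ext1 k
    rw [blockOp_diagonal_apply, PiLp.sub_apply, blockOp_apply, blockOp_apply]
    simp only [hBentry, PiLp.sub_apply, PiLp.smul_apply, blockOp_diagonal_apply, w, y, G,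
      add_sub_cancel]
    have hpk := (hp k).ne'
    have hopt' := hopt k
    set a : Fin N → ℝ := fun l => ((2⁻¹ : ℝ) • ((1 : Matrix (Fin N) (Fin N) ℝ) + A)) l k with ha
    have h1 : ∑ l, (p k * a l) • (W i l - wstar - μo • (q l / p l) • (gJ l (W i l) - gJ l wstar))
        = p k • (∑ l, a l • (W i l - (q l * μo / p l) • gJ l (W i l)) - wstar
            + ∑ l, (a l * (q l * μo / p l)) • gJ l wstar) := by
      have h2 : wstar = ∑ l, a l • wstar := by rw [← Finset.sum_smul, hcol, one_smul]
      rw [smul_add, smul_sub]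
      conv_rhs => rw [h2]
      simp only [Finset.smul_sum]
      rw [← Finset.sum_sub_distrib, ← Finset.sum_add_distrib]
      refine Finset.sum_congr rfl fun l _ => ?_
      rw [← h2]
      module
    have h3 : ∑ l, V k l • (Y i l - Ystar l) = ∑ l, V k l • Y i l - ∑ l, V k l • Ystar l := by
      simp only [smul_sub, Finset.sum_sub_distrib]
    have h4 : ∑ l, (a l * (q l * μo / p l)) • gJ l wstar
        = -((p k)⁻¹ • ∑ l, V k l • Ystar l) := eq_neg_of_add_eq_zero_left hopt'
    have hWk : W (i + 1) k = ∑ l, a l • (W i l - (q l * μo / p l) • gJ l (W i l))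
        - (p k)⁻¹ • ∑ l, V k l • Y i l := hW i k
    rw [h1, h3, h4, hWk]
    simp only [smul_add, smul_sub, smul_neg, smul_smul, mul_inv_cancel₀ hpk, one_smul]
    abel
  have hy_rec : ∀ i, y (i + 1) = y i + blockOp V (w (i + 1)) := by
    intro i
    ext1 k
    rw [PiLp.add_apply, blockOp_apply]
    simp only [w, y, smul_sub, Finset.sum_sub_distrib, ← Finset.sum_smul, hV1, zero_smul, sub_zero]
    rw [hY]
    abel
  have hy_range : ∀ i, y i ∈ LinearMap.range (blockOp (M := M) V) := by
    intro i
    induction i with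
    | zero =>
      obtain ⟨Xv, hX⟩ := hrange
      refine ⟨-WithLp.toLp 2 Xv, ?_⟩
      rw [map_neg]
      ext1 k
      simp only [y, hY0, hX]
      simp [blockOp_apply]
    | succ i ih =>
      rw [hy_rec]
      exact Submodule.add_mem _ ih ⟨_, rfl⟩
  have hE : ∀ i, ‖blockOp r (w i)‖ ^ 2 + ‖y i‖ ^ 2
      ≤ ρ ^ i * (‖blockOp r (w 0)‖ ^ 2 + ‖y 0‖ ^ 2) := by
    intro i
    induction i with
    | zero => simp
    | succ i ih =>
      refine (hstep _ _ _ _ (hw_rec i) (hy_rec i) (hy_range (i + 1))).trans ?_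
      rw [pow_succ' ρ i, mul_assoc]
      exact mul_le_mul_of_nonneg_left ih hρ0
  refine ⟨(cR + 1) * (‖blockOp r (w 0)‖ ^ 2 + ‖y 0‖ ^ 2), by positivity, ρ, hρ0, hρ1, fun i => ?_⟩
  have hnw : ∑ k, ‖W (i + 1) k - wstar‖ ^ 2 = ‖w (i + 1)‖ ^ 2 :=
    (PiLp.norm_sq_eq_of_L2 _ (w (i + 1))).symm
  have hny : ∑ k, ‖Y (i + 1) k - Ystar k‖ ^ 2 = ‖y (i + 1)‖ ^ 2 :=
    (PiLp.norm_sq_eq_of_L2 _ (y (i + 1))).symm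
  rw [hnw, hny]
  calc ‖w (i + 1)‖ ^ 2 + ‖y (i + 1)‖ ^ 2
      ≤ (cR + 1) * (‖blockOp r (w (i + 1))‖ ^ 2 + ‖y (i + 1)‖ ^ 2) := by
        have h1 := hRlow (w (i + 1))
        have h2 : 0 ≤ cR * ‖y (i + 1)‖ ^ 2 := by positivity
        have h3 := sq_nonneg ‖blockOp r (w (i + 1))‖
        linarith
    _ ≤ (cR + 1) * (ρ ^ i * (‖blockOp r (w 0)‖ ^ 2 + ‖y 0‖ ^ 2)) := by
        refine mul_le_mul_of_nonneg_left ((hE (i + 1)).trans ?_) (by positivity)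
        refine mul_le_mul_of_nonneg_right ?_ (by positivity)
        exact pow_le_pow_of_le_one hρ0 hρ1.le (Nat.le_succ i)
    _ = _ := by ring
end

section
/- In the stated EXTRA setting, the largest eigenvalue of the symmetric matrix Ā(I_N + V²)Ā equals max over k of ((λ_k(A) + 1)/2)² · (2N + 1 − λ_k(A)) / (2N), and this value is strictly smaller than the largest eigenvalue of I_N + V², which equals (2N + 1 − λ_N(A)) / (2N). Consequently, the spectral norm of the block matrix T_d = [[Ā, 0],[VĀ, 0]] is strictly smaller than the spectral norm of T_e = [[I_N, 0],[V, 0]]. -/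
/-!
Since `V²` is the affine expression `(1 - A) / (2N)` in `A`, both `Ā(1 + V²)Ā` and `1 + V²` are
polynomials in the symmetric matrix `A`; by spectral mapping (`spectrum_aeval_eq_range`) their
spectra are the images of the eigenvalues `λ_k` under `((x+1)/2)² (2N+1-x)/(2N)` and
`(2N+1-x)/(2N)`.

For the strict inequality, every `λ_k ≠ 1` satisfies `((λ_k+1)/2)² < 1`, while for `λ_k = 1` the
first polynomial takes the value `1`, which is below the second one at any eigenvalue other than
`1`; such an eigenvalue exists because `1` is simple and `N ≥ 2`.

Finally `TᵀT` is block diagonal with one zero block for both `T_d` and `T_e`, so its nonzero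
spectrum is that of `Ā(1 + V²)Ā`, respectively `1 + V²`.
-/

open Matrix

open Polynomial in
/-- Spectral mapping for real polynomials of a symmetric matrix; the functional calculus replaces
the algebraic closedness needed for a general matrix. -/
lemma spectrum_aeval_eq_range {n : Type*} [Fintype n] [DecidableEq n] {A : Matrix n n ℝ}
    (hA : A.IsHermitian) (q : ℝ[X]) :
    spectrum ℝ (aeval A q) = Set.range fun k => q.eval (hA.eigenvalues k) := by
  have hsa : IsSelfAdjoint A := hA
  rw [← cfc_polynomial q A hsa, cfc_map_spectrum (R := ℝ) (fun x => q.eval x) A hsa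
    q.continuous.continuousOn, hA.spectrum_real_eq_range_eigenvalues, ← Set.range_comp]
  rfl

lemma mem_spectrum_fromBlocks_zero {n : Type*} [Fintype n] [DecidableEq n] (M : Matrix n n ℝ)
    {μ : ℝ} (hμ : μ ≠ 0) :
    μ ∈ spectrum ℝ (fromBlocks M 0 0 (0 : Matrix n n ℝ)) ↔ μ ∈ spectrum ℝ M := by
  have h : algebraMap ℝ (Matrix (n ⊕ n) (n ⊕ n) ℝ) μ - fromBlocks M 0 0 (0 : Matrix n n ℝ) =
      fromBlocks (algebraMap ℝ (Matrix n n ℝ) μ - M) 0 0 (algebraMap ℝ (Matrix n n ℝ) μ) := by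
    simp only [Algebra.algebraMap_eq_smul_one, ← fromBlocks_one, fromBlocks_smul, sub_eq_add_neg,
      fromBlocks_neg, fromBlocks_add]
    simp
  have hu : IsUnit (algebraMap ℝ (Matrix n n ℝ) μ) := (IsUnit.mk0 μ hμ).map _
  rw [spectrum.mem_iff, spectrum.mem_iff, h, isUnit_fromBlocks_zero₁₂]
  simp [hu]

/-- In the EXTRA setting, the largest eigenvalue of `Ā(I + V²)Ā` equals
`max_k ((λ_k(A)+1)/2)² (2N+1−λ_k(A))/(2N)`, which is strictly smaller than the largest
eigenvalue of `I + V²`, namely `(2N+1−λ_N(A))/(2N)`.  Consequently the spectral norm of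
`T_d = [[Ā,0],[VĀ,0]]` is strictly smaller than that of `T_e = [[I,0],[V,0]]` (the spectral
norm being the square root of the top eigenvalue of `TᵀT`). -/
theorem stmt_4 (N : ℕ) (hN : 2 ≤ N) (A : Matrix (Fin N) (Fin N) ℝ)
    (hA : A.IsHermitian)
    (hApos : ∀ i j, 0 ≤ A i j)
    (hrow : ∀ i, ∑ j, A i j = 1)
    (hAprim : ∃ m : ℕ, 0 < m ∧ ∀ i j, 0 < (A ^ m) i j)
    (hev_le : ∀ k, hA.eigenvalues k ≤ 1)
    (hev_gt : ∀ k, -1 < hA.eigenvalues k)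
    (hone : ∃! k, hA.eigenvalues k = 1)
    (V : Matrix (Fin N) (Fin N) ℝ) (hV : V.PosSemidef)
    (hVsq : V * V = ((2 * (N : ℝ))⁻¹) • ((1 : Matrix (Fin N) (Fin N) ℝ) - A)) :
    let Abar : Matrix (Fin N) (Fin N) ℝ := (2⁻¹ : ℝ) • (1 + A)
    let Td := Matrix.fromBlocks Abar (0 : Matrix (Fin N) (Fin N) ℝ) (V * Abar)
      (0 : Matrix (Fin N) (Fin N) ℝ)
    let Te := Matrix.fromBlocks (1 : Matrix (Fin N) (Fin N) ℝ)
      (0 : Matrix (Fin N) (Fin N) ℝ) V (0 : Matrix (Fin N) (Fin N) ℝ)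
    IsGreatest (spectrum ℝ (Abar * ((1 : Matrix (Fin N) (Fin N) ℝ) + V * V) * Abar))
      (⨆ k, ((hA.eigenvalues k + 1) / 2) ^ 2 *
        ((2 * (N : ℝ) + 1 - hA.eigenvalues k) / (2 * (N : ℝ)))) ∧
    IsGreatest (spectrum ℝ ((1 : Matrix (Fin N) (Fin N) ℝ) + V * V))
      ((2 * (N : ℝ) + 1 - ⨅ k, hA.eigenvalues k) / (2 * (N : ℝ))) ∧
    (⨆ k, ((hA.eigenvalues k + 1) / 2) ^ 2 *
        ((2 * (N : ℝ) + 1 - hA.eigenvalues k) / (2 * (N : ℝ)))) <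
      (2 * (N : ℝ) + 1 - ⨅ k, hA.eigenvalues k) / (2 * (N : ℝ)) ∧
    ∀ sd se : ℝ,
      IsGreatest (spectrum ℝ (Tdᵀ * Td)) sd →
      IsGreatest (spectrum ℝ (Teᵀ * Te)) se →
      Real.sqrt sd < Real.sqrt se := by
  intro Abar Td Te
  have hN0 : (0 : ℝ) < 2 * (N : ℝ) := by
    have : (0 : ℝ) < N := by exact_mod_cast (by omega : 0 < N)
    linarith
  have : Nonempty (Fin N) := ⟨⟨0, by omega⟩⟩
  set f : Fin N → ℝ := fun k => ((hA.eigenvalues k + 1) / 2) ^ 2 *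
    ((2 * (N : ℝ) + 1 - hA.eigenvalues k) / (2 * (N : ℝ))) with hf
  set g : Fin N → ℝ := fun k => (2 * (N : ℝ) + 1 - hA.eigenvalues k) / (2 * (N : ℝ)) with hg
  have hspec1 : spectrum ℝ (Abar * ((1 : Matrix (Fin N) (Fin N) ℝ) + V * V) * Abar) =
      Set.range f := by
    have h := spectrum_aeval_eq_range hA
      (((2⁻¹ : ℝ) • (1 + Polynomial.X)) *
        (1 + (2 * (N : ℝ))⁻¹ • (1 - Polynomial.X)) * ((2⁻¹ : ℝ) • (1 + Polynomial.X)))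
    simp only [map_mul, map_add, map_sub, map_smul, map_one, Polynomial.aeval_X] at h
    rw [hVsq, h]
    congr 1
    funext k
    simp only [hf, Polynomial.eval_mul, Polynomial.eval_add, Polynomial.eval_sub,
      Polynomial.eval_smul, Polynomial.eval_one, Polynomial.eval_X, smul_eq_mul]
    field_simp
    ring
  have hspec2 : spectrum ℝ ((1 : Matrix (Fin N) (Fin N) ℝ) + V * V) = Set.range g := by
    have h := spectrum_aeval_eq_range hA (1 + (2 * (N : ℝ))⁻¹ • (1 - Polynomial.X))
    simp only [map_add, map_sub, map_smul, map_one, Polynomial.aeval_X] at h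
    rw [hVsq, h]
    congr 1
    funext k
    simp only [hg, Polynomial.eval_add, Polynomial.eval_sub,
      Polynomial.eval_smul, Polynomial.eval_one, Polynomial.eval_X, smul_eq_mul]
    field_simp
    ring
  have hinf : ∀ k, ⨅ k, hA.eigenvalues k ≤ hA.eigenvalues k :=
    fun k => ciInf_le (Set.finite_range _).bddBelow k
  obtain ⟨km, hkm⟩ := exists_eq_ciInf_of_finite (f := hA.eigenvalues)
  obtain ⟨kM, hkM⟩ := exists_eq_ciSup_of_finite (f := f)
  have hG1 : IsGreatest (Set.range f) (⨆ k, f k) := by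
    refine ⟨⟨kM, hkM⟩, ?_⟩
    rintro _ ⟨k, rfl⟩
    exact le_ciSup (Set.finite_range f).bddAbove k
  have hG2 : IsGreatest (Set.range g)
      ((2 * (N : ℝ) + 1 - ⨅ k, hA.eigenvalues k) / (2 * (N : ℝ))) := by
    refine ⟨⟨km, by simp only [hg, hkm]⟩, ?_⟩
    rintro _ ⟨k, rfl⟩
    have := hinf k
    simp only [hg]
    gcongr
  have hmin : ⨅ k, hA.eigenvalues k < 1 := by
    obtain ⟨k₀, -, huniq⟩ := hone
    have : Nontrivial (Fin N) := Fin.nontrivial_iff_two_le.2 hN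
    obtain ⟨k₁, hk₁⟩ := exists_ne k₀
    exact (hinf k₁).trans_lt (lt_of_le_of_ne (hev_le k₁) fun h => hk₁ (huniq k₁ h))
  have hlt : (⨆ k, f k) < (2 * (N : ℝ) + 1 - ⨅ k, hA.eigenvalues k) / (2 * (N : ℝ)) := by
    rw [← hkM]
    simp only [hf]
    have h1 := hev_le kM
    have h2 := hev_gt kM
    have h3 := hinf kM
    rcases h1.eq_or_lt with h | h
    · rw [h, lt_div_iff₀ hN0]
      field_simp
      linarith
    · have hpos : 0 < (2 * (N : ℝ) + 1 - hA.eigenvalues kM) / (2 * (N : ℝ)) :=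
        div_pos (by linarith) hN0
      have hsq : ((hA.eigenvalues kM + 1) / 2) ^ 2 < 1 :=
        pow_lt_one₀ (by linarith) (by linarith) two_ne_zero
      calc _ < 1 * ((2 * (N : ℝ) + 1 - hA.eigenvalues kM) / (2 * (N : ℝ))) := by gcongr
        _ ≤ _ := by rw [one_mul]; gcongr
  have hf0 : 0 ≤ ⨆ k, f k := by
    rw [← hkM]
    exact mul_nonneg (sq_nonneg _) (div_nonneg (by linarith [hev_le kM]) hN0.le)
  refine ⟨hspec1 ▸ hG1, hspec2 ▸ hG2, hlt, fun sd se hsd hse => ?_⟩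
  have hAt : Aᵀ = A := by
    rw [← conjTranspose_eq_transpose_of_trivial]; exact hA
  have hVt : Vᵀ = V := by
    rw [← conjTranspose_eq_transpose_of_trivial]; exact hV.isHermitian
  have hAbt : Abarᵀ = Abar := by simp [Abar, hAt]
  have hTd : Tdᵀ * Td = fromBlocks (Abar * (1 + V * V) * Abar) 0 0 0 := by
    simp only [Td, fromBlocks_transpose, fromBlocks_multiply, transpose_mul, hAbt, hVt]
    simp [mul_add, add_mul, mul_assoc]
  have hTe : Teᵀ * Te = fromBlocks (1 + V * V) 0 0 0 := by
    simp only [Te, fromBlocks_transpose, fromBlocks_multiply, hVt]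
    simp
  rw [hTd] at hsd
  rw [hTe] at hse
  have hsd' : sd ≤ ⨆ k, f k := by
    rcases eq_or_ne sd 0 with h | h
    · rwa [h]
    · have := (mem_spectrum_fromBlocks_zero _ h).1 hsd.1
      rw [hspec1] at this
      exact hG1.2 this
  have hse' := hse.2 ((mem_spectrum_fromBlocks_zero _ (hf0.trans_lt hlt).ne').2
    (hspec2 ▸ hG2.1))
  exact (Real.sqrt_lt_sqrt_iff_of_pos ((hf0.trans_lt hlt).trans_le hse')).2
    ((hsd'.trans_lt hlt).trans_le hse')
end

section
/- In the stated network setup, the null space of V equals the null space of P − AP, and both equal the span of the all-ones vector 𝟙_N. -/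
/-!
Since `V` is symmetric, `ker V = ker (V * V)`, and `V * V` is a nonzero multiple of `P - A P`.
By the balance condition `P - A P = P (1 - Aᵀ)` with `P` invertible, so a vector `x` in its kernel
satisfies `xᵀ A = xᵀ`, hence `xᵀ A ^ m = xᵀ` for all `m`. For the `m` of primitivity, every entry
of `x` is then an average of all entries with strictly positive weights; looking at the largest
entry (`eq_of_vecMul_eq_self_of_pos`) forces `x` to be constant. Conversely `𝟙` is in the kernel
because `A p = p`.
-/

open Matrix

lemma vecMul_pow_eq_self {n : Type*} [Fintype n] [DecidableEq n] {A : Matrix n n ℝ} {x : n → ℝ}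
    (h : x ᵥ* A = x) (m : ℕ) : x ᵥ* (A ^ m) = x := by
  induction m with
  | zero => simp
  | succ k ih => rw [pow_succ, ← Matrix.vecMul_vecMul, ih, h]

/-- Maximum principle: a left fixed vector of a matrix with positive entries and unit column sums
is constant. -/
lemma eq_of_vecMul_eq_self_of_pos {n : Type*} [Fintype n] [Nonempty n]
    {B : Matrix n n ℝ} (hB : ∀ i j, 0 < B i j) (h1 : (fun _ => (1 : ℝ)) ᵥ* B = fun _ => 1)
    {x : n → ℝ} (hx : x ᵥ* B = x) : ∃ c : ℝ, ∀ j, x j = c := by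
  obtain ⟨i, hi⟩ := Finite.exists_max x
  refine ⟨x i, fun j => ?_⟩
  have e1 : ∑ k, 1 * B k i = 1 := congrFun h1 i
  have e2 : ∑ k, x k * B k i = x i := congrFun hx i
  have hsum : ∑ k, (x i - x k) * B k i = 0 := by
    simp only [one_mul] at e1
    simp only [sub_mul, Finset.sum_sub_distrib, ← Finset.mul_sum, e1, e2]
    ring
  have hterm := (Finset.sum_eq_zero_iff_of_nonneg
    (fun k _ => mul_nonneg (sub_nonneg.2 (hi k)) (hB k i).le)).1 hsum j (Finset.mem_univ j)
  rcases mul_eq_zero.1 hterm with h | h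
  · linarith
  · exact absurd h (hB j i).ne'

/-- In the network setup, the null space of `V` equals the null space of `P − AP`, and both
equal the span of the all-ones vector `𝟙_N`. -/
theorem stmt_6 (N : ℕ) (hN : 0 < N) (A : Matrix (Fin N) (Fin N) ℝ)
    (hApos : ∀ i j, 0 ≤ A i j)
    (hAleft : ∀ j, ∑ i, A i j = 1)
    (hAprim : ∃ m : ℕ, 0 < m ∧ ∀ i j, 0 < (A ^ m) i j)
    (p : Fin N → ℝ) (hp : ∀ k, 0 < p k) (hpsum : ∑ k, p k = 1)
    (hAp : A.mulVec p = p)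
    (hbal : Matrix.diagonal p * Aᵀ = A * Matrix.diagonal p)
    (V : Matrix (Fin N) (Fin N) ℝ) (hV : V.PosSemidef)
    (hVsq : V * V = (2⁻¹ : ℝ) • (Matrix.diagonal p - A * Matrix.diagonal p)) :
    LinearMap.ker V.mulVecLin =
      LinearMap.ker (Matrix.diagonal p - A * Matrix.diagonal p).mulVecLin ∧
    LinearMap.ker V.mulVecLin =
      Submodule.span ℝ {(fun _ => (1 : ℝ) : Fin N → ℝ)} := by
  have hker : LinearMap.ker V.mulVecLin =
      LinearMap.ker (Matrix.diagonal p - A * Matrix.diagonal p).mulVecLin := by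
    have h := Matrix.ker_mulVecLin_conjTranspose_mul_self V
    rw [hV.isHermitian.eq, hVsq] at h
    rw [← h]
    ext x
    simp [LinearMap.mem_ker, Matrix.smul_mulVec]
  refine ⟨hker, ?_⟩
  rw [hker]
  ext x
  rw [LinearMap.mem_ker, Matrix.mulVecLin_apply, Submodule.mem_span_singleton]
  constructor
  · intro hx
    have hfix : x ᵥ* A = x := by
      rw [← hbal, Matrix.sub_mulVec, ← Matrix.mulVec_mulVec, Matrix.mulVec_transpose] at hx
      funext i
      have hi := congrFun hx i
      simp only [Pi.sub_apply, Matrix.mulVec_diagonal, Pi.zero_apply, ← mul_sub] at hi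
      rcases mul_eq_zero.1 hi with h | h
      · exact absurd h (hp i).ne'
      · linarith
    have hone : (fun _ => (1 : ℝ)) ᵥ* A = fun _ => 1 := by
      funext j
      simpa [Matrix.vecMul, dotProduct] using hAleft j
    obtain ⟨m, -, hm⟩ := hAprim
    haveI : Nonempty (Fin N) := ⟨⟨0, hN⟩⟩
    obtain ⟨c, hc⟩ := eq_of_vecMul_eq_self_of_pos hm (vecMul_pow_eq_self hone m)
      (vecMul_pow_eq_self hfix m)
    exact ⟨c, funext fun j => by simp [hc j]⟩
  · rintro ⟨c, rfl⟩
    have hd : Matrix.diagonal p *ᵥ (fun _ => (1 : ℝ)) = p := by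
      funext i
      simp [Matrix.mulVec_diagonal]
    rw [Matrix.mulVec_smul, Matrix.sub_mulVec, ← Matrix.mulVec_mulVec, hd, hAp, sub_self, smul_zero]
end

section
/- In the stated network setup, for any block vector W = (w_1,…,w_N) ∈ (ℝ^M)^N, one has (V ⊗ I_M)W = 0 if and only if w_1 = w_2 = … = w_N; and likewise ((P − AP) ⊗ I_M)W = 0 if and only if w_1 = w_2 = … = w_N. -/
open Matrix

/-!
Coordinatewise, the claim is that the kernels of `P - AP` and of `V` both consist of the constant
vectors. By balance `P - AP = P(I - Aᵀ)` with `P` invertible, so the kernel of `P - AP` is the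
fixed space of `Aᵀ`. A vector fixed by `Aᵀ` is fixed by `(Aᵀ)^m`, a row-stochastic matrix with
strictly positive entries for suitable `m`, and the maximum principle
(`const_of_pos_stochastic`) makes it constant. Conversely `(P - AP)𝟙 = p - Ap = 0`.
Finally `V` is symmetric with `V² = (P - AP)/2`, so `ker V = ker VᵀV = ker (P - AP)`.
-/

/-- Maximum principle: at a maximal entry `x i`, the relation `∑ j, B i j * (x i - x j) = 0` is a
vanishing sum of nonnegative terms with positive weights. -/
lemma const_of_pos_stochastic {N : ℕ} (B : Matrix (Fin N) (Fin N) ℝ)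
    (hB : ∀ i j, 0 < B i j) (hrow : ∀ i, ∑ j, B i j = 1)
    (x : Fin N → ℝ) (hx : B *ᵥ x = x) (k l : Fin N) : x k = x l := by
  haveI : Nonempty (Fin N) := ⟨k⟩
  obtain ⟨i, hi⟩ := Finite.exists_max x
  have hsum : ∑ j, B i j * (x i - x j) = 0 := by
    have h : ∑ j, B i j * x j = x i := congrFun hx i
    simp only [mul_sub, Finset.sum_sub_distrib, ← Finset.sum_mul, hrow, h]
    ring
  have hall : ∀ j, x i = x j := fun j => by
    have h := (Finset.sum_eq_zero_iff_of_nonneg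
      (fun j _ => mul_nonneg (hB i j).le (sub_nonneg.2 (hi j)))).1 hsum j (Finset.mem_univ j)
    rcases mul_eq_zero.1 h with h | h
    · exact absurd h (hB i j).ne'
    · linarith
  rw [← hall k, ← hall l]

/-- `(S ⊗ I_M)W = 0` decouples into one kernel condition per coordinate. -/
lemma block_eq_zero_iff {N M : ℕ} (S : Matrix (Fin N) (Fin N) ℝ)
    (W : Fin N → EuclideanSpace ℝ (Fin M)) :
    (∀ k, ∑ l, S k l • W l = 0) ↔ ∀ a, S *ᵥ (fun l => W l a) = 0 := by
  have key : ∀ k a, (∑ l, S k l • W l) a = (S *ᵥ (fun l => W l a)) k := fun k a => by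
    simp [mulVec, dotProduct]
  constructor
  · intro h a
    ext k
    rw [← key, h k]
    rfl
  · intro h k
    ext a
    rw [key, h a]
    rfl

lemma pow_fixed {N : ℕ} (B : Matrix (Fin N) (Fin N) ℝ) (x : Fin N → ℝ)
    (h : B *ᵥ x = x) (m : ℕ) : (B ^ m) *ᵥ x = x := by
  induction m with
  | zero => simp
  | succ m ih => rw [pow_succ, ← mulVec_mulVec, h, ih]

/-- In the network setup, for any block vector `W = (w₁,…,w_N) ∈ (ℝ^M)^N`:
`(V ⊗ I_M)W = 0` iff all blocks of `W` agree, and `((P − AP) ⊗ I_M)W = 0` iff all blocks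
of `W` agree.  Here `(S ⊗ I_M)W` has `k`-th block `∑ l, S k l • W l`. -/
theorem stmt_7 (N M : ℕ) (hN : 0 < N) (A : Matrix (Fin N) (Fin N) ℝ)
    (hApos : ∀ i j, 0 ≤ A i j)
    (hAleft : ∀ j, ∑ i, A i j = 1)
    (hAprim : ∃ m : ℕ, 0 < m ∧ ∀ i j, 0 < (A ^ m) i j)
    (p : Fin N → ℝ) (hp : ∀ k, 0 < p k) (hpsum : ∑ k, p k = 1)
    (hAp : A.mulVec p = p)
    (hbal : Matrix.diagonal p * Aᵀ = A * Matrix.diagonal p)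
    (V : Matrix (Fin N) (Fin N) ℝ) (hV : V.PosSemidef)
    (hVsq : V * V = (2⁻¹ : ℝ) • (Matrix.diagonal p - A * Matrix.diagonal p))
    (W : Fin N → EuclideanSpace ℝ (Fin M)) :
    ((∀ k, ∑ l, V k l • W l = 0) ↔ ∀ k l, W k = W l) ∧
    ((∀ k, ∑ l, (Matrix.diagonal p - A * Matrix.diagonal p) k l • W l = 0) ↔
      ∀ k l, W k = W l) := by
  obtain ⟨m, -, hm⟩ := hAprim
  have hL : ∀ x : Fin N → ℝ, (diagonal p - A * diagonal p) *ᵥ x = 0 ↔ ∀ k l, x k = x l := by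
    intro x
    constructor
    · intro h
      have hfix : Aᵀ *ᵥ x = x := by
        rw [← hbal, sub_mulVec, ← mulVec_mulVec] at h
        ext k
        have hk := congrFun h k
        simp only [Pi.sub_apply, mulVec_diagonal, Pi.zero_apply, ← mul_sub] at hk
        rcases mul_eq_zero.1 hk with h0 | h0
        · exact absurd h0 (hp k).ne'
        · linarith
      have hone : Aᵀ *ᵥ (fun _ => 1) = fun _ => 1 := by
        ext j
        simp [mulVec, dotProduct, hAleft]
      refine const_of_pos_stochastic (Aᵀ ^ m) ?_ ?_ x (pow_fixed _ _ hfix m)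
      · intro i j
        rw [← transpose_pow]
        exact hm j i
      · intro i
        have h1 := congrFun (pow_fixed _ _ hone m) i
        simpa [mulVec, dotProduct] using h1
    · intro h
      have hx : x = x ⟨0, hN⟩ • (fun _ => (1 : ℝ)) := by
        ext k
        simp [h k ⟨0, hN⟩]
      have hP : diagonal p *ᵥ (fun _ => (1 : ℝ)) = p := by
        ext k
        simp [mulVec_diagonal]
      rw [hx, mulVec_smul, sub_mulVec, ← mulVec_mulVec, hP, hAp, sub_self, smul_zero]
  have hVL : ∀ x : Fin N → ℝ, V *ᵥ x = 0 ↔ (diagonal p - A * diagonal p) *ᵥ x = 0 := by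
    intro x
    rw [← conjTranspose_mul_self_mulVec_eq_zero V x, hV.isHermitian.eq, hVsq, smul_mulVec]
    simp
  have hW : (∀ a, ∀ k l, W k a = W l a) ↔ ∀ k l, W k = W l :=
    ⟨fun h k l => by ext a; exact h a k l, fun h a k l => by rw [h k l]⟩
  rw [block_eq_zero_iff, block_eq_zero_iff]
  simp only [hVL, hL, hW, and_self]
end

section
/- In the stated network setup with cost assumptions and with q_k = β μ_k p_k for positive step-sizes μ_k and a positive constant β: if block vectors W⋆ = (w⋆_1,…,w⋆_N) and Y⋆ = (y⋆_1,…,y⋆_N) in (ℝ^M)^N satisfy, for every k, ∑_l Ā_{l,k} μ_l ∇J_l(w⋆_l) + p_k⁻¹ ∑_l V_{k,l} y⋆_l = 0 and ∑_l V_{k,l} w⋆_l = 0, then w⋆_1 = w⋆_2 = … = w⋆_N = w⋆, where w⋆ is the unique minimizer of 𝒥⋆(w) = ∑_k q_k J_k(w). -/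
open Matrix

/-!
The second optimality condition gives `V² 𝒲 = 0`, which by the balance condition says that every
coordinate of `𝒲` is a fixed left vector of `A`. Left-stochasticity and primitivity force such a
vector to be constant (`const_of_vecMul_eq`, a maximum principle), so all `w⋆_k` equal a common `w`.

Symmetry of `V` and `V² 𝟙 = (p - A p) / 2 = 0` give `V 𝟙 = 0`. Hence the `p`-weighted sum of the
first optimality condition loses its `V` term, and since `Ā p = p` it becomes
`∑ p_l μ_l ∇J_l(w) = 0`. Up to the factor `β` this is `∇𝒥⋆(w) = 0`, so `w` minimizes the convex
function `𝒥⋆` (`min_of_gradient_zero`). Strong convexity of one summand makes `𝒥⋆` strictly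
convex, so its minimizer is unique.
-/

lemma vecMul_pow_eq {N : ℕ} {A : Matrix (Fin N) (Fin N) ℝ} {x : Fin N → ℝ}
    (hx : x ᵥ* A = x) (m : ℕ) : x ᵥ* (A ^ m) = x := by
  induction m with
  | zero => simp
  | succ n ih => rw [pow_succ, ← Matrix.vecMul_vecMul, ih, hx]

/-- Maximum principle: at an index `k` where `x` is maximal, `x k` is a strictly positive convex
combination (with the weights in column `k` of `A ^ m`) of all entries of `x`. -/
lemma const_of_vecMul_eq {N : ℕ} {A : Matrix (Fin N) (Fin N) ℝ}
    (hAleft : ∀ j, ∑ i, A i j = 1)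
    (hAprim : ∃ m : ℕ, 0 < m ∧ ∀ i j, 0 < (A ^ m) i j)
    {x : Fin N → ℝ} (hx : x ᵥ* A = x) (a b : Fin N) : x a = x b := by
  obtain ⟨m, -, hm⟩ := hAprim
  have h1 : (fun _ => 1 : Fin N → ℝ) ᵥ* A = fun _ => 1 := by
    funext j
    simpa [Matrix.vecMul, dotProduct] using hAleft j
  have : Nonempty (Fin N) := ⟨a⟩
  obtain ⟨k, hk⟩ := Finite.exists_max x
  have hxm := congrFun (vecMul_pow_eq hx m) k
  have h1m := congrFun (vecMul_pow_eq h1 m) k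
  simp only [Matrix.vecMul, dotProduct, one_mul] at hxm h1m
  have hsum : ∑ l, (x k - x l) * (A ^ m) l k = 0 := by
    simp only [sub_mul, Finset.sum_sub_distrib, ← Finset.mul_sum, h1m, hxm]
    ring
  have key := (Finset.sum_eq_zero_iff_of_nonneg
    (fun l _ => mul_nonneg (sub_nonneg.2 (hk l)) (hm l k).le)).1 hsum
  have all : ∀ l, x l = x k := fun l => by
    rcases mul_eq_zero.1 (key l (Finset.mem_univ l)) with h | h
    · linarith
    · exact absurd h (hm l k).ne'
  rw [all a, all b]

/-- Along the line from `w` to `y` the function is convex with zero initial slope. -/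
lemma min_of_gradient_zero {E : Type*} [NormedAddCommGroup E] [InnerProductSpace ℝ E]
    [CompleteSpace E] {F : E → ℝ} (hF : ConvexOn ℝ Set.univ F) {w : E}
    (hw : HasGradientAt F 0 w) (y : E) : F w ≤ F y := by
  have hc : ConvexOn ℝ Set.univ (fun t : ℝ => F (AffineMap.lineMap w y t)) := by
    have h := hF.comp_affineMap (AffineMap.lineMap w y : ℝ →ᵃ[ℝ] E)
    rw [Set.preimage_univ] at h
    exact h
  have hd : HasDerivAt (fun t : ℝ => F (AffineMap.lineMap w y t)) 0 0 := by
    have h1 : HasFDerivAt F (0 : E →L[ℝ] ℝ) (AffineMap.lineMap w y (0 : ℝ)) := by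
      simpa using hw.hasFDerivAt
    have h2 : HasDerivAt (fun t : ℝ => (AffineMap.lineMap w y t : E)) (y - w) 0 :=
      AffineMap.hasDerivAt_lineMap
    exact h1.comp_hasDerivAt (0 : ℝ) h2
  have := hc.le_slope_of_hasDerivAt (Set.mem_univ 0) (Set.mem_univ 1) one_pos hd
  simpa [slope_def_field] using this

/-- Optimality condition for exact diffusion: in the network setup with cost assumptions and
`q_k = β μ_k p_k` (μ_k > 0, β > 0), if block vectors `W⋆, Y⋆ ∈ (ℝ^M)^N` satisfy, for every
`k`, `∑_l Ā_{l,k} μ_l ∇J_l(w⋆_l) + p_k⁻¹ ∑_l V_{k,l} y⋆_l = 0` and `∑_l V_{k,l} w⋆_l = 0`,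
then `w⋆_1 = ⋯ = w⋆_N = w⋆`, the unique minimizer of `𝒥⋆(w) = ∑_k q_k J_k(w)`. -/
theorem stmt_8 (N M : ℕ) (hN : 0 < N) (A : Matrix (Fin N) (Fin N) ℝ)
    (hApos : ∀ i j, 0 ≤ A i j)
    (hAleft : ∀ j, ∑ i, A i j = 1)
    (hAprim : ∃ m : ℕ, 0 < m ∧ ∀ i j, 0 < (A ^ m) i j)
    (p : Fin N → ℝ) (hp : ∀ k, 0 < p k) (hpsum : ∑ k, p k = 1)
    (hAp : A.mulVec p = p)
    (hbal : Matrix.diagonal p * Aᵀ = A * Matrix.diagonal p)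
    (V : Matrix (Fin N) (Fin N) ℝ) (hV : V.PosSemidef)
    (hVsq : V * V = (2⁻¹ : ℝ) • (Matrix.diagonal p - A * Matrix.diagonal p))
    (J : Fin N → EuclideanSpace ℝ (Fin M) → ℝ)
    (gJ : Fin N → EuclideanSpace ℝ (Fin M) → EuclideanSpace ℝ (Fin M))
    (hgJ : ∀ k x, HasGradientAt (J k) (gJ k x) x)
    (hconv : ∀ k, ConvexOn ℝ Set.univ (J k))
    (δ : ℝ) (hδ : 0 < δ)
    (hLip : ∀ k x y, ‖gJ k x - gJ k y‖ ≤ δ * ‖x - y‖)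
    (ν : ℝ) (hν : 0 < ν) (k₀ : Fin N)
    (hsc : StrongConvexOn Set.univ ν (J k₀))
    (q : Fin N → ℝ) (hq : ∀ k, 0 < q k)
    (μ : Fin N → ℝ) (hμ : ∀ k, 0 < μ k)
    (β : ℝ) (hβ : 0 < β)
    (hqrel : ∀ k, q k = β * μ k * p k)
    (wstar : EuclideanSpace ℝ (Fin M))
    (hwstar : ∀ w, ∑ k, q k * J k wstar ≤ ∑ k, q k * J k w)
    (Wstar Ystar : Fin N → EuclideanSpace ℝ (Fin M))
    (hKKT1 : ∀ k, (∑ l, (((2⁻¹ : ℝ) • ((1 : Matrix (Fin N) (Fin N) ℝ) + A)) l k * μ l)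
        • gJ l (Wstar l)) + (p k)⁻¹ • (∑ l, V k l • Ystar l) = 0)
    (hKKT2 : ∀ k, ∑ l, V k l • Wstar l = 0) :
    ∀ k, Wstar k = wstar := by
  -- Each coordinate of `Wstar` is a left fixed vector of `A`, hence constant.
  have hcons : ∀ a b, Wstar a = Wstar b := by
    intro a b
    ext i
    refine const_of_vecMul_eq (x := fun l => Wstar l i) hAleft hAprim ?_ a b
    have hVx : V *ᵥ (fun l => Wstar l i) = 0 := by
      funext k
      simpa [Matrix.mulVec, dotProduct] using congrArg (fun v => v i) (hKKT2 k)
    have hVVx : (V * V) *ᵥ (fun l => Wstar l i) = 0 := by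
      rw [← Matrix.mulVec_mulVec, hVx, Matrix.mulVec_zero]
    rw [hVsq, ← hbal, Matrix.smul_mulVec, Matrix.sub_mulVec, ← Matrix.mulVec_mulVec,
      Matrix.mulVec_transpose] at hVVx
    funext k
    have hk := congrFun hVVx k
    simp only [Pi.smul_apply, Pi.sub_apply, Matrix.mulVec_diagonal, smul_eq_mul,
      Pi.zero_apply] at hk
    have : p k * ((fun l => Wstar l i) ᵥ* A) k = p k * Wstar k i := by linarith
    exact mul_left_cancel₀ (hp k).ne' this
  have hVT : Vᵀ = V := by simpa using hV.isHermitian.eq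
  have hV1 : V *ᵥ (fun _ => 1) = 0 := by
    have h2 : (V * V) *ᵥ (fun _ => 1) = 0 := by
      have hd : Matrix.diagonal p *ᵥ (fun _ => 1) = p := by
        funext k; simp [Matrix.mulVec_diagonal]
      rw [hVsq, Matrix.smul_mulVec, Matrix.sub_mulVec, ← Matrix.mulVec_mulVec, hd, hAp]
      simp
    rw [← dotProduct_self_eq_zero, Matrix.dotProduct_mulVec, ← Matrix.mulVec_transpose, hVT,
      Matrix.mulVec_mulVec, h2, zero_dotProduct]
  have hVcol : ∀ l, ∑ k, V k l = 0 := by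
    intro l
    have := congrFun hV1 l
    rw [← hVT] at this
    simpa [Matrix.mulVec, dotProduct] using this
  have hAbar : ∀ l, ∑ k, p k * ((2⁻¹ : ℝ) • ((1 : Matrix (Fin N) (Fin N) ℝ) + A)) l k = p l := by
    intro l
    have h : (((2⁻¹ : ℝ) • ((1 : Matrix (Fin N) (Fin N) ℝ) + A)) *ᵥ p) l = p l := by
      rw [Matrix.smul_mulVec, Matrix.add_mulVec, hAp, Matrix.one_mulVec]
      simp only [Pi.smul_apply, Pi.add_apply, smul_eq_mul]
      ring
    rw [← h]
    simp only [Matrix.mulVec, dotProduct, mul_comm]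
  generalize (2⁻¹ : ℝ) • ((1 : Matrix (Fin N) (Fin N) ℝ) + A) = B at hAbar hKKT1
  -- The `p`-weighted sum of the first optimality condition.
  have hgrad : ∑ l, (p l * μ l) • gJ l (Wstar l) = 0 := by
    have h : ∑ k, p k • ((∑ l, (B l k * μ l) • gJ l (Wstar l))
        + (p k)⁻¹ • (∑ l, V k l • Ystar l)) = 0 := by
      simp only [hKKT1, smul_zero, Finset.sum_const_zero]
    simp only [smul_add, Finset.sum_add_distrib, smul_inv_smul₀ (hp _).ne'] at h
    have hY : ∑ k, ∑ l, V k l • Ystar l = 0 := by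
      rw [Finset.sum_comm]
      simp only [← Finset.sum_smul, hVcol, zero_smul, Finset.sum_const_zero]
    rw [hY, add_zero] at h
    rw [← h]
    simp only [Finset.smul_sum, smul_smul, ← mul_assoc]
    rw [Finset.sum_comm]
    refine Finset.sum_congr rfl fun l _ => ?_
    rw [← Finset.sum_smul, ← Finset.sum_mul, hAbar]
  intro k
  have hterm : ∀ j, ConvexOn ℝ Set.univ (fun w => q j * J j w) := fun j =>
    (hconv j).smul (hq j).le
  have hstrict : StrictConvexOn ℝ Set.univ (fun w => ∑ j, q j * J j w) := by
    have hk₀ : StrictConvexOn ℝ Set.univ (fun w => q k₀ * J k₀ w) := by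
      have hs := hsc.strictConvexOn hν
      refine ⟨convex_univ, fun x hx y hy hxy a b ha hb hab => ?_⟩
      have := mul_lt_mul_of_pos_left (hs.2 hx hy hxy ha hb hab) (hq k₀)
      simp only [smul_eq_mul] at this ⊢
      linarith
    have hrest : ConvexOn ℝ Set.univ (fun w => ∑ j ∈ Finset.univ.erase k₀, q j * J j w) := by
      refine ⟨convex_univ, fun x hx y hy a b ha hb hab => ?_⟩
      simp only [Finset.smul_sum, ← Finset.sum_add_distrib]
      exact Finset.sum_le_sum fun j _ => (hterm j).2 hx hy ha hb hab
    have h := hk₀.add_convexOn hrest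
    have he : (fun w => ∑ j, q j * J j w)
        = (fun w => q k₀ * J k₀ w) + fun w => ∑ j ∈ Finset.univ.erase k₀, q j * J j w := by
      funext w
      exact (Finset.add_sum_erase _ _ (Finset.mem_univ k₀)).symm
    rw [he]
    exact h
  have hG : HasGradientAt (fun w => ∑ j, q j * J j w) 0 (Wstar k) := by
    have h0 : ∑ j, q j • gJ j (Wstar k) = 0 := by
      have : ∑ j, q j • gJ j (Wstar k) = β • ∑ l, (p l * μ l) • gJ l (Wstar l) := by
        rw [Finset.smul_sum]
        refine Finset.sum_congr rfl fun j _ => ?_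
        rw [hqrel j, hcons k j, smul_smul]
        congr 1
        ring
      rw [this, hgrad, smul_zero]
    rw [← h0, hasGradientAt_iff_hasFDerivAt, map_sum]
    simp only [map_smul]
    exact HasFDerivAt.fun_sum fun j _ => (hgJ j (Wstar k)).hasFDerivAt.const_mul (q j)
  exact hstrict.eq_of_isMinOn (fun y _ => min_of_gradient_zero hstrict.convexOn hG y)
    (fun y _ => hwstar y) (Set.mem_univ _) (Set.mem_univ _)
end
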